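/- For every integer n ≥ 20 there exists a state T, reachable from ₀(n) by split moves only and in which no split is legal (every entry of T is 0 or 1), with the following property: writing i₀ for the least index with T i₀ = 1, one has T(i₀ + 1) = 1, and for every integer j with 1 ≤ j and (j : ℝ) ≤ n − 2·log_φ n − 7 one has T(i₀ + 2j − 1) = 1 and T(i₀ + 2j) = 0, with (i₀ + 2j : ℝ) < −log_φ n − 3 for each such j. That is, after all splits are exhausted the left edge has the form 1101…10 with at least n − 2·log_φ n − 7 zeros, each left of index −log_φ n − 3. -/

import Mathlib

noncomputable section

/-- The golden ratio. -/
def phi : ℝ := (1 + Real.sqrt 5) / 2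

/-- Base-φ logarithm. -/
def logphi (x : ℝ) : ℝ := Real.logb phi x

/-- A Bergman state: a finitely supported function from ℤ to ℕ. -/
abbrev BState := ℤ →₀ ℕ

/-- A split move at index `i`. -/
def SplitAt (S S' : BState) (i : ℤ) : Prop :=
  2 ≤ S i ∧
    S' = S - Finsupp.single i 2 + Finsupp.single (i + 1) 1 + Finsupp.single (i - 2) 1

/-- A combine move at index `i`. -/
def CombineAt (S S' : BState) (i : ℤ) : Prop :=
  1 ≤ S i ∧ 1 ≤ S (i + 1) ∧
    S' = S - Finsupp.single i 1 - Finsupp.single (i + 1) 1 + Finsupp.single (i + 2) 1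

/-- A move is a split or a combine. -/
def Move (S S' : BState) : Prop := (∃ i, SplitAt S S' i) ∨ (∃ i, CombineAt S S' i)

/-- Terminal state: no move is legal. -/
def Terminal (S : BState) : Prop :=
  (∀ i, S i ≤ 1) ∧ ∀ i, ¬(1 ≤ S i ∧ 1 ≤ S (i + 1))

/-- A Bergman game of length `m` from `S`. -/
def Game (S : BState) (m : ℕ) (g : ℕ → BState) : Prop :=
  g 0 = S ∧ ∀ j < m, Move (g j) (g (j + 1))

/-- A complete Bergman game of length `m` from `S`. -/
def CompleteGame (S : BState) (m : ℕ) (g : ℕ → BState) : Prop :=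
  Game S m g ∧ Terminal (g m)

/-- Reachability by a finite sequence of moves. -/
def Reachable : BState → BState → Prop := Relation.ReflTransGen Move

/-- Reachability by split moves only. -/
def SplitReachable : BState → BState → Prop :=
  Relation.ReflTransGen fun S S' => ∃ i, SplitAt S S' i

/-- The initial state `₀(n)`: `n` chips at index 0. -/
def initState (n : ℕ) : BState := Finsupp.single 0 n

/-- Total number of chips in a state. -/
def chips (S : BState) : ℕ := S.sum fun _ c => c

open Classical in
/-- The number of split moves among the first `m` steps of `g`. -/
def splitCount (g : ℕ → BState) (m : ℕ) : ℕ :=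
  ((Finset.range m).filter fun j => ∃ i, SplitAt (g j) (g (j + 1)) i).card

open Classical in
/-- The number of combine moves among the first `m` steps of `g`. -/
def combineCount (g : ℕ → BState) (m : ℕ) : ℕ :=
  ((Finset.range m).filter fun j => ∃ i, CombineAt (g j) (g (j + 1)) i).card

/-!
In a run of splits, three consecutive indices that have once held a chip always hold one, and no
chip can jump over such a triple; hence the support of all reachable states is bounded on the left
in terms of the number of chips. As every split lowers the sum of the indices by one, splitting
terminates.

The number of chips and the values of the state at `φ` and at its conjugate `ψ` never change. Let
`F` be the support of a final state, cut it at an index `s ≤ 0`, and scale the left part by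
`φ ^ (-s)`. The result is a positive element of `ℤ[φ]` smaller than `φ ^ 2`. Its conjugate differs
from `n * ψ ^ (-s)`, which is small if `s` is a little below `-log_φ n`, by an alternating sum over
the right part, so it lies between `-1` and `2`. Only `1` and `φ` have these properties, and the
only expansions of a power of `φ` with digits `0` and `1` have the form `1101…010`. By counting,
all but about `2 * log_φ n` of the `n` chips lie in the left part.
-/

open Finset
open Finsupp (linearCombination linearCombination_apply linearCombination_single)
open scoped goldenRatio

section Splits

variable {S S' : BState} {i : ℤ}

lemma SplitAt.apply_eq (h : SplitAt S S' i) (j : ℤ) :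
    S' j = S j - (if i = j then 2 else 0) + (if i + 1 = j then 1 else 0) +
      (if i - 2 = j then 1 else 0) := by
  simp [h.2, Finsupp.single_apply]

lemma SplitAt.linearCombination_add {M : Type*} [AddCommMonoid M] (f : ℤ → M)
    (h : SplitAt S S' i) :
    linearCombination ℕ f S' + 2 • f i = linearCombination ℕ f S + (f (i + 1) + f (i - 2)) := by
  obtain ⟨hi, rfl⟩ := h
  have hS : linearCombination ℕ f (S - Finsupp.single i 2) + 2 • f i = linearCombination ℕ f S := by
    rw [← linearCombination_single ℕ 2 i, ← map_add,
      tsub_add_cancel_of_le (Finsupp.single_le_iff.2 hi)]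
  simp only [map_add, linearCombination_single, one_nsmul, ← hS]
  abel

lemma SplitReachable.linearCombination_eq {M : Type*} [AddCancelCommMonoid M] {f : ℤ → M}
    (hf : ∀ i, f (i + 1) + f (i - 2) = 2 • f i) (h : SplitReachable S S') :
    linearCombination ℕ f S' = linearCombination ℕ f S := by
  induction h with
  | refl => rfl
  | tail _ hsplit ih =>
    obtain ⟨i, hi⟩ := hsplit
    have hadd := hi.linearCombination_add f
    rw [hf] at hadd
    exact (add_right_cancel hadd).trans ih

lemma linearCombination_one_eq_chips (S : BState) :
    linearCombination ℕ (fun _ => 1) S = chips S := by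
  simp [linearCombination_apply, chips]

lemma SplitReachable.chips_eq (h : SplitReachable S S') : chips S' = chips S := by
  rw [← linearCombination_one_eq_chips, ← linearCombination_one_eq_chips]
  exact h.linearCombination_eq fun _ => rfl

lemma card_support_le_chips (S : BState) : #S.support ≤ chips S :=
  card_eq_sum_ones S.support ▸ sum_le_sum fun _ hi =>
    Nat.one_le_iff_ne_zero.2 (Finsupp.mem_support_iff.1 hi)

lemma linearCombination_eq_sum_support {M : Type*} [AddCommMonoid M] (f : ℤ → M)
    (hS : ∀ i, S i ≤ 1) : linearCombination ℕ f S = ∑ i ∈ S.support, f i :=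
  sum_congr rfl fun i hi => by
    have hi' := Finsupp.mem_support_iff.1 hi
    have hone : S i = 1 := by have := hS i; omega
    simp [hone]

end Splits

section Termination

variable {S S' : BState} {m i : ℤ}

/-- Among any three consecutive indices `b - 2`, `b - 1`, `b` with `b ≤ m`, one is occupied as soon
as there is a chip at or to the left of `b`. This property survives splits and bounds the indices
of the chips from below. -/
def NoTripleGapBelow (m : ℤ) (S : BState) : Prop :=
  ∀ i b, S i ≠ 0 → i ≤ b → b ≤ m → ∃ j, b - 2 ≤ j ∧ j ≤ b ∧ S j ≠ 0

lemma exists_noTripleGapBelow (S : BState) : ∃ m, NoTripleGapBelow m S := by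
  obtain ⟨m, hm⟩ := S.support.bddBelow
  refine ⟨m, fun i b hi hib hbm => ⟨i, ?_, hib, hi⟩⟩
  have hmi : m ≤ i := hm (Finsupp.mem_support_iff.2 hi)
  omega

lemma NoTripleGapBelow.splitAt (hS : NoTripleGapBelow m S) (h : SplitAt S S' i) :
    NoTripleGapBelow m S' := by
  intro i' b hi' hib hbm
  have happly := h.apply_eq
  by_cases hold : ∃ j ≤ b, S j ≠ 0
  · obtain ⟨j, hjb, hj⟩ := hold
    obtain ⟨w, hbw, hwb, hw⟩ := hS j b hj hjb hbm
    rcases eq_or_ne w i with rfl | hwi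
    · -- A split inside the triple leaves a chip there.
      rcases eq_or_ne w b with rfl | hwb'
      · exact ⟨w - 2, by omega, by omega, by simp [happly]⟩
      · exact ⟨w + 1, by omega, by omega, by simp [happly]⟩
    · exact ⟨w, hbw, hwb, by simp [happly, hw, hwi.symm]⟩
  · -- The first chip to get to `b` or beyond comes from the right, in a jump of length two.
    push Not at hold
    have hib' : b < i := by
      by_contra! hle
      have := hold i hle
      have := h.1
      omega
    refine ⟨i - 2, by omega, ?_, by simp [happly]⟩
    by_contra! hlt
    refine hi' ?_
    rw [happly, hold i' hib, if_neg (by omega), if_neg (by omega), if_neg (by omega)]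

lemma NoTripleGapBelow.sub_three_mul_chips_le (hS : NoTripleGapBelow m S) (hi : S i ≠ 0) :
    m - 3 * chips S ≤ i := by
  by_contra! hlt
  have htriple (k : ℕ) (hk : k ∈ range (chips S + 1)) :
      ∃ j, m - 3 * k - 2 ≤ j ∧ j ≤ m - 3 * k ∧ S j ≠ 0 := by
    have hk := mem_range.1 hk
    exact hS i (m - 3 * k) hi (by omega) (by omega)
  choose! f hlower hupper hf using htriple
  have hinj : Set.InjOn f (range (chips S + 1)) := by
    intro k hk l hl hkl
    have := hlower k hk
    have := hupper k hk
    have := hlower l hl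
    have := hupper l hl
    omega
  have hcard : #(range (chips S + 1)) ≤ #S.support :=
    card_le_card_of_injOn f (fun k hk => Finsupp.mem_support_iff.2 (hf k hk)) hinj
  have hchips := card_support_le_chips S
  rw [card_range] at hcard
  omega

lemma SplitAt.linearCombination_id (h : SplitAt S S' i) :
    linearCombination ℕ (id : ℤ → ℤ) S' = linearCombination ℕ id S - 1 := by
  have hadd := h.linearCombination_add (id : ℤ → ℤ)
  simp only [id, nsmul_eq_mul, Nat.cast_ofNat] at hadd ⊢
  linarith

lemma chips_mul_le_linearCombination_id {b : ℤ} (hb : ∀ i, S i ≠ 0 → b ≤ i) :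
    chips S * b ≤ linearCombination ℕ (id : ℤ → ℤ) S := by
  rw [chips, Finsupp.sum, Nat.cast_sum, sum_mul, linearCombination_apply, Finsupp.sum]
  refine sum_le_sum fun i hi => ?_
  rw [id, nsmul_eq_mul]
  exact mul_le_mul_of_nonneg_left (hb i (Finsupp.mem_support_iff.1 hi)) (by positivity)

theorem exists_splitReachable_forall_le_one (S : BState) :
    ∃ T, SplitReachable S T ∧ ∀ i, T i ≤ 1 := by
  obtain ⟨m, hm⟩ := exists_noTripleGapBelow S
  suffices key : ∀ (t : ℕ) (S' : BState), NoTripleGapBelow m S' →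
      linearCombination ℕ (id : ℤ → ℤ) S' < chips S' * (m - 3 * chips S') + t →
      ∃ T, SplitReachable S' T ∧ ∀ i, T i ≤ 1 by
    obtain ⟨t, ht⟩ := exists_nat_gt
      (linearCombination ℕ (id : ℤ → ℤ) S - chips S * (m - 3 * chips S))
    exact key t S hm (by simpa [sub_lt_iff_lt_add'] using ht)
  intro t
  induction t with
  | zero =>
    intro S' hgap hlt
    have := chips_mul_le_linearCombination_id fun i hi => hgap.sub_three_mul_chips_le (i := i) hi
    push_cast at hlt
    linarith
  | succ t ih =>
    intro S' hgap hlt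
    by_cases hstable : ∀ i, S' i ≤ 1
    · exact ⟨S', Relation.ReflTransGen.refl, hstable⟩
    · push Not at hstable
      obtain ⟨i, hi⟩ := hstable
      have hsplit : SplitAt S' _ i := ⟨hi, rfl⟩
      obtain ⟨T, hreach, hT⟩ := ih _ (hgap.splitAt hsplit) (by
        rw [hsplit.linearCombination_id,
          SplitReachable.chips_eq (Relation.ReflTransGen.single ⟨i, hsplit⟩)]
        push_cast at hlt
        linarith)
      exact ⟨T, Relation.ReflTransGen.head ⟨i, hsplit⟩ hreach, hT⟩

end Termination

section GoldenPowers

section Field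

variable {K : Type*} [Field K] {x : K}

lemma ne_zero_of_sq_eq_add_one (hx : x ^ 2 = x + 1) : x ≠ 0 := by
  rintro rfl
  simp at hx

lemma zpow_add_two_of_sq_eq_add_one (hx : x ^ 2 = x + 1) (i : ℤ) :
    x ^ (i + 2) = x ^ (i + 1) + x ^ i := by
  have hx0 := ne_zero_of_sq_eq_add_one hx
  rw [zpow_add₀ hx0, zpow_add₀ hx0, zpow_ofNat, zpow_one, hx]
  ring

lemma zpow_add_one_add_zpow_sub_two_of_sq_eq_add_one (hx : x ^ 2 = x + 1) (i : ℤ) :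
    x ^ (i + 1) + x ^ (i - 2) = 2 * x ^ i := by
  have hi := zpow_add_two_of_sq_eq_add_one hx (i - 1)
  have hi' := zpow_add_two_of_sq_eq_add_one hx (i - 2)
  ring_nf at hi hi' ⊢
  rw [hi, hi']
  ring

/-- The quantifier over `x` comes last so that `φ` and `ψ` share their coefficients. -/
lemma exists_int_zpow_eq_add_mul (K : Type*) [Field K] (k : ℤ) :
    ∃ a b : ℤ, ∀ x : K, x ^ 2 = x + 1 → x ^ k = a + b * x := by
  induction k with
  | zero => exact ⟨1, 0, by simp⟩
  | succ k ih =>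
    obtain ⟨a, b, hab⟩ := ih
    refine ⟨b, a + b, fun x hx => ?_⟩
    rw [zpow_add_one₀ (ne_zero_of_sq_eq_add_one hx), hab x hx]
    push_cast
    linear_combination (b : K) * hx
  | pred k ih =>
    obtain ⟨a, b, hab⟩ := ih
    refine ⟨b - a, a, fun x hx => ?_⟩
    have hinv : x⁻¹ = x - 1 := inv_eq_of_mul_eq_one_right (by linear_combination hx)
    rw [zpow_sub_one₀ (ne_zero_of_sq_eq_add_one hx), hab x hx, hinv]
    push_cast
    linear_combination (b : K) * hx

lemma exists_int_zpow_mul_sum_eq_add_mul (K : Type*) [Field K] (k : ℤ) (A : Finset ℤ) :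
    ∃ a b : ℤ, ∀ x : K, x ^ 2 = x + 1 → x ^ k * ∑ i ∈ A, x ^ i = a + b * x := by
  choose a b hab using exists_int_zpow_eq_add_mul K
  refine ⟨∑ i ∈ A, a (k + i), ∑ i ∈ A, b (k + i), fun x hx => ?_⟩
  have hterm (i : ℤ) : x ^ k * x ^ i = a (k + i) + b (k + i) * x := by
    rw [← zpow_add₀ (ne_zero_of_sq_eq_add_one hx), hab _ x hx]
  simp only [mul_sum, hterm, sum_add_distrib, Int.cast_sum, sum_mul]

end Field

lemma three_halves_lt_goldenRatio : 3 / 2 < φ := by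
  nlinarith [Real.goldenRatio_sq, Real.goldenRatio_pos]

lemma abs_goldenConj_zpow (k : ℤ) : |ψ ^ k| = φ ^ (-k) := by
  rw [abs_zpow, abs_of_neg Real.goldenConj_neg, ← Real.inv_goldenRatio, inv_zpow']

lemma add_mul_goldenRatio_eq_one_or_eq_goldenRatio {a b : ℤ} (hpos : 0 < a + b * φ)
    (hlt : a + b * φ < φ ^ 2) (hconj : (a + b * ψ : ℝ) ∈ Set.Ioo (-1) 2) :
    a + b * φ = 1 ∨ a + b * φ = φ := by
  obtain ⟨hconj_gt, hconj_lt⟩ := hconj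
  have hφ := three_halves_lt_goldenRatio
  rw [Real.goldenRatio_sq] at hlt
  rw [← Real.one_sub_goldenConj] at hconj_gt hconj_lt
  -- The difference of the number and its conjugate is `b * √5`.
  have hb_lt : b < 2 := by
    by_contra! hb
    have hb : (2 : ℝ) ≤ b := by exact_mod_cast hb
    nlinarith
  have hb_gt : -1 < b := by
    by_contra! hb
    have hb : (b : ℝ) ≤ -1 := by exact_mod_cast hb
    nlinarith
  obtain rfl | rfl : b = 0 ∨ b = 1 := by omega
  · left
    have ha_pos : 0 < a := by simpa using hpos
    have ha_lt : a < 2 := by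
      have : (a : ℝ) < 2 := by simpa using hconj_lt
      exact_mod_cast this
    obtain rfl : a = 1 := by omega
    simp
  · right
    push_cast at hlt hconj_gt
    have ha_lt : a < 1 := by
      have : (a : ℝ) < 1 := by linarith
      exact_mod_cast this
    have ha_gt : -1 < a := by
      have : (-1 : ℝ) < a := by linarith
      exact_mod_cast this
    obtain rfl : a = 0 := by omega
    simp

end GoldenPowers

section DigitSets

variable {A F : Finset ℤ} {s : ℤ}

lemma sum_goldenRatio_zpow_lt (hA : ∀ i ∈ A, i ≤ s) : ∑ i ∈ A, φ ^ i < φ ^ (s + 2) := by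
  induction A using Finset.induction_on_max generalizing s with
  | empty => simpa using zpow_pos Real.goldenRatio_pos (s + 2)
  | insert a A hmax ih =>
    have hA_lt : ∑ i ∈ A, φ ^ i < φ ^ (a + 1) := by
      convert ih fun i hi => Int.le_sub_one_of_lt (hmax i hi) using 2
      ring
    calc ∑ i ∈ insert a A, φ ^ i = φ ^ a + ∑ i ∈ A, φ ^ i :=
          sum_insert fun ha => (hmax a ha).false
      _ < φ ^ a + φ ^ (a + 1) := by gcongr
      _ = φ ^ (a + 2) := by
        rw [zpow_add_two_of_sq_eq_add_one Real.goldenRatio_sq, add_comm]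
      _ ≤ φ ^ (s + 2) := by
        gcongr
        · exact Real.one_lt_goldenRatio.le
        · exact hA a (mem_insert_self a A)

lemma le_of_mem_of_sum_goldenRatio_zpow_lt {i : ℤ} (hi : i ∈ A)
    (hsum : ∑ i ∈ A, φ ^ i < φ ^ (s + 1)) : i ≤ s := by
  have hterm : φ ^ i ≤ ∑ i ∈ A, φ ^ i :=
    single_le_sum (f := fun i => φ ^ i) (fun i _ => (zpow_pos Real.goldenRatio_pos i).le) hi
  exact Int.lt_add_one_iff.1
    ((zpow_lt_zpow_iff_right₀ Real.one_lt_goldenRatio).1 (hterm.trans_lt hsum))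

/-- The set of indices of the ones in the pattern `1101…010` that begins at `i₀` and contains `k`
zeros, the last of them at `i₀ + 2 * k`. -/
def ladder (i₀ : ℤ) (k : ℕ) : Finset ℤ :=
  insert i₀ ((range k).image fun j : ℕ => i₀ + 2 * j + 1)

lemma mem_ladder {i₀ i : ℤ} {k : ℕ} :
    i ∈ ladder i₀ k ↔ i = i₀ ∨ ∃ j < k, i = i₀ + 2 * j + 1 := by
  simp [ladder, eq_comm]

lemma ladder_succ (i₀ : ℤ) (k : ℕ) :
    ladder i₀ (k + 1) = insert (i₀ + 2 * k + 1) (ladder i₀ k) := by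
  rw [ladder, range_add_one, image_insert, insert_comm, ladder]

lemma card_ladder (i₀ : ℤ) (k : ℕ) : #(ladder i₀ k) = k + 1 := by
  rw [ladder, card_insert_of_notMem, card_image_of_injective, card_range]
  · intro j l hjl
    simpa using hjl
  · simp only [mem_image, not_exists, not_and]
    intro j _
    omega

lemma eq_singleton_of_sum_goldenRatio_zpow_eq (hs : s ∈ A) (hsum : ∑ i ∈ A, φ ^ i = φ ^ s) :
    A = {s} := by
  have hrest : ∑ i ∈ A.erase s, φ ^ i = 0 := by
    rw [← add_sum_erase A _ hs] at hsum
    linarith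
  have hempty : A.erase s = ∅ := by
    by_contra hne
    exact (sum_pos (fun i _ => zpow_pos Real.goldenRatio_pos i)
      (nonempty_iff_ne_empty.2 hne)).ne' hrest
  rw [← insert_erase hs, hempty, insert_empty_eq]

lemma sub_one_mem_of_sum_goldenRatio_zpow_eq (hs : s ∉ A) (hsum : ∑ i ∈ A, φ ^ i = φ ^ s) :
    s - 1 ∈ A := by
  by_contra hs'
  have hle (i : ℤ) (hi : i ∈ A) : i ≤ s - 2 := by
    have his : i ≤ s := le_of_mem_of_sum_goldenRatio_zpow_lt hi
      (hsum.trans_lt (zpow_lt_zpow_right₀ Real.one_lt_goldenRatio (lt_add_one s)))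
    have : i ≠ s := by rintro rfl; exact hs hi
    have : i ≠ s - 1 := by rintro rfl; exact hs' hi
    omega
  have hlt := sum_goldenRatio_zpow_lt hle
  rw [sub_add_cancel] at hlt
  exact hlt.ne hsum

lemma exists_eq_ladder_of_sum_goldenRatio_zpow_eq (hsum : ∑ i ∈ A, φ ^ i = φ ^ s) :
    ∃ k : ℕ, A = ladder (s - 2 * k) k := by
  induction A using Finset.strongInduction generalizing s with
  | H A ih =>
    by_cases hs : s ∈ A
    · exact ⟨0, by simp [eq_singleton_of_sum_goldenRatio_zpow_eq hs hsum, ladder]⟩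
    · have hs' := sub_one_mem_of_sum_goldenRatio_zpow_eq hs hsum
      have hrest : ∑ i ∈ A.erase (s - 1), φ ^ i = φ ^ (s - 2) := by
        have hrec := zpow_add_two_of_sq_eq_add_one Real.goldenRatio_sq (s - 2)
        rw [← add_sum_erase A _ hs'] at hsum
        ring_nf at hsum hrec ⊢
        linarith
      obtain ⟨k, hk⟩ := ih _ (erase_ssubset hs') hrest
      refine ⟨k + 1, ?_⟩
      rw [← insert_erase hs', hk, ladder_succ]
      congr 2 <;> push_cast <;> ring

lemma goldenConj_mul_mem_Icc {r : ℝ} (hr : r ∈ Set.Icc (-1) (-ψ)) :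
    ψ * r ∈ Set.Icc (-1) (-ψ) ∧ ψ * (1 + r) ∈ Set.Icc (-1) (-ψ) := by
  obtain ⟨hr_ge, hr_le⟩ := hr
  have hψ := Real.goldenConj_neg
  have hψ_sq := Real.goldenConj_sq
  constructor <;> constructor <;> nlinarith

lemma filter_lt_of_add_one_mem (hs : s + 1 ∈ F) :
    F.filter (s < ·) = insert (s + 1) (F.filter (s + 1 < ·)) := by
  ext i
  simp only [mem_filter, mem_insert]
  grind

lemma filter_lt_of_add_one_notMem (hs : s + 1 ∉ F) : F.filter (s < ·) = F.filter (s + 1 < ·) := by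
  refine filter_congr fun i hi => ?_
  have : i ≠ s + 1 := by rintro rfl; exact hs hi
  omega

lemma zpow_neg_mul_sum_goldenConj_zpow_mem_Icc (F : Finset ℤ) (s : ℤ) :
    ψ ^ (-s) * ∑ i ∈ F with s < i, ψ ^ i ∈ Set.Icc (-1) (-ψ) := by
  obtain ⟨b, hb⟩ := F.bddAbove
  suffices key : ∀ (t : ℕ) (s : ℤ), b ≤ s + t →
      ψ ^ (-s) * ∑ i ∈ F with s < i, ψ ^ i ∈ Set.Icc (-1) (-ψ) from
    key (b - s).toNat s (by omega)
  intro t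
  induction t with
  | zero =>
    intro s hbs
    have hempty : F.filter (s < ·) = ∅ :=
      filter_eq_empty_iff.2 fun i hi => not_lt.2 ((hb hi).trans (by simpa using hbs))
    rw [hempty, sum_empty, mul_zero]
    constructor <;> linarith [Real.goldenConj_neg]
  | succ t ih =>
    intro s hbs
    have hzpow : ψ ^ (-s) = ψ * ψ ^ (-(s + 1)) := by
      rw [← zpow_one_add₀ Real.goldenConj_ne_zero]
      congr 1
      ring
    obtain ⟨hskip, htake⟩ := goldenConj_mul_mem_Icc (ih (s + 1) (by push_cast at hbs; omega))
    by_cases hs : s + 1 ∈ F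
    · rw [filter_lt_of_add_one_mem hs, sum_insert (by simp), hzpow, mul_assoc, mul_add,
        ← zpow_add₀ Real.goldenConj_ne_zero, neg_add_cancel, zpow_zero]
      exact htake
    · rwa [filter_lt_of_add_one_notMem hs, hzpow, mul_assoc]

lemma zpow_neg_mul_sum_goldenConj_zpow_mem_Ioo (hF : |ψ ^ (-s) * ∑ i ∈ F, ψ ^ i| < φ ^ (-2 : ℤ)) :
    ψ ^ (-s) * ∑ i ∈ F with i ≤ s, ψ ^ i ∈ Set.Ioo (-1) 2 := by
  have hsplit := sum_filter_add_sum_filter_not F (· ≤ s) (ψ ^ ·)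
  simp only [not_le] at hsplit
  obtain ⟨hright_ge, hright_le⟩ := zpow_neg_mul_sum_goldenConj_zpow_mem_Icc F s
  have hφ : φ ^ (-2 : ℤ) = ψ + 1 := by
    rw [← Real.goldenConj_sq, ← inv_zpow', Real.inv_goldenRatio, zpow_ofNat, neg_sq]
  rw [hφ, ← hsplit, mul_add, abs_lt] at hF
  have hψ := Real.goldenConj_neg
  constructor <;> linarith

lemma exists_filter_le_eq_ladder (hF : |ψ ^ (-s) * ∑ i ∈ F, ψ ^ i| < φ ^ (-2 : ℤ))
    (hne : (F.filter (· ≤ s)).Nonempty) :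
    ∃ (i₀ : ℤ) (k : ℕ), F.filter (· ≤ s) = ladder i₀ k ∧ s ≤ i₀ + 2 * k ∧ i₀ + 2 * k ≤ s + 1 := by
  obtain ⟨a, b, hab⟩ := exists_int_zpow_mul_sum_eq_add_mul ℝ (-s) (F.filter (· ≤ s))
  have hφ := hab φ Real.goldenRatio_sq
  have hs_pos := zpow_pos Real.goldenRatio_pos (-s)
  have hpos : 0 < φ ^ (-s) * ∑ i ∈ F with i ≤ s, φ ^ i :=
    mul_pos hs_pos (sum_pos (fun i _ => zpow_pos Real.goldenRatio_pos i) hne)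
  have hlt : φ ^ (-s) * ∑ i ∈ F with i ≤ s, φ ^ i < φ ^ 2 := by
    calc φ ^ (-s) * ∑ i ∈ F with i ≤ s, φ ^ i < φ ^ (-s) * φ ^ (s + 2) := by
          gcongr
          exact sum_goldenRatio_zpow_lt fun i hi => (mem_filter.1 hi).2
      _ = φ ^ 2 := by
        rw [← zpow_add₀ Real.goldenRatio_ne_zero, neg_add_cancel_left, zpow_ofNat]
  have hconj := zpow_neg_mul_sum_goldenConj_zpow_mem_Ioo hF
  rw [hab ψ Real.goldenConj_sq] at hconj
  rw [hφ] at hpos hlt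
  have hsum (t : ℝ) (ht : a + b * φ = t) : ∑ i ∈ F with i ≤ s, φ ^ i = φ ^ s * t := by
    rw [← ht, ← hφ, ← mul_assoc, ← zpow_add₀ Real.goldenRatio_ne_zero, add_neg_cancel, zpow_zero,
      one_mul]
  rcases add_mul_goldenRatio_eq_one_or_eq_goldenRatio hpos hlt hconj with hone | hgold
  · obtain ⟨k, hk⟩ := exists_eq_ladder_of_sum_goldenRatio_zpow_eq (s := s)
      (by rw [hsum 1 hone, mul_one])
    exact ⟨s - 2 * k, k, hk, by omega, by omega⟩
  · obtain ⟨k, hk⟩ := exists_eq_ladder_of_sum_goldenRatio_zpow_eq (s := s + 1)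
      (by rw [hsum φ hgold, zpow_add_one₀ Real.goldenRatio_ne_zero])
    exact ⟨s + 1 - 2 * k, k, hk, by omega, by omega⟩

lemma card_le_card_filter_le_add {l : ℤ} (hF : ∀ i ∈ F, i ≤ l) :
    #F ≤ #(F.filter (· ≤ s)) + (l - s).toNat := by
  have hright : F.filter (¬ · ≤ s) ⊆ Ioc s l := fun i hi => by
    obtain ⟨hiF, his⟩ := mem_filter.1 hi
    exact mem_Ioc.2 ⟨not_le.1 his, hF i hiF⟩
  rw [← card_filter_add_card_filter_not (s := F) (· ≤ s), ← Int.card_Ioc]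
  gcongr

end DigitSets

section Logarithm

lemma lt_goldenRatio_pow_floor_logphi_add_one {x : ℝ} (hx : 0 < x) :
    x < φ ^ (⌊logphi x⌋₊ + 1) := by
  have hlog : logphi x < (⌊logphi x⌋₊ + 1 : ℕ) := by exact_mod_cast Nat.lt_floor_add_one _
  rw [← Real.rpow_natCast]
  exact (Real.logb_lt_iff_lt_rpow Real.one_lt_goldenRatio hx).1 hlog

lemma sq_le_goldenRatio_pow (m : ℕ) : ((m + 19 : ℕ) : ℝ) ^ 2 ≤ φ ^ (m + 13) := by
  have hφ := three_halves_lt_goldenRatio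
  induction m with
  | zero =>
    have hfib : φ * 233 + 144 = φ ^ 13 := by
      simpa [Nat.fib_add_two] using Real.goldenRatio_mul_fib_succ_add_fib 12
    norm_num
    linarith
  | succ m ih =>
    calc ((m + 1 + 19 : ℕ) : ℝ) ^ 2 ≤ 3 / 2 * ((m + 19 : ℕ) : ℝ) ^ 2 := by
          push_cast
          nlinarith [(m.cast_nonneg : (0 : ℝ) ≤ m)]
      _ ≤ φ * φ ^ (m + 13) := by gcongr
      _ = φ ^ (m + 1 + 13) := by ring

lemma two_mul_logphi_le {n : ℕ} (hn : 19 ≤ n) : 2 * logphi n ≤ n - 6 := by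
  obtain ⟨m, rfl⟩ := Nat.exists_eq_add_of_le' hn
  have hpos : (0 : ℝ) < (m + 19 : ℕ) ^ 2 := by positivity
  calc 2 * logphi (m + 19 : ℕ) = Real.logb φ ((m + 19 : ℕ) ^ 2) := by
        rw [Real.logb_pow, Nat.cast_ofNat]
        rfl
    _ ≤ (m + 13 : ℕ) := by
        rw [Real.logb_le_iff_le_rpow Real.one_lt_goldenRatio hpos, Real.rpow_natCast]
        exact sq_le_goldenRatio_pow m
    _ = (m + 19 : ℕ) - 6 := by push_cast; ring

end Logarithm

section LeftEdge

theorem exists_isLeast_alternating_left_edge {F : Finset ℤ} {n l : ℕ} (hcard : #F = n)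
    (hφ : ∑ i ∈ F, φ ^ i = n) (hψ : ∑ i ∈ F, ψ ^ i = n) (hnl : n < φ ^ (l + 1))
    (hln : 2 * l + 4 ≤ n) :
    ∃ i₀ : ℤ, IsLeast (F : Set ℤ) i₀ ∧ ∀ j : ℤ, 1 ≤ j → j ≤ n - 2 * l - 5 →
      i₀ + 2 * j - 1 ∈ F ∧ i₀ + 2 * j ∉ F ∧ i₀ + 2 * j ≤ -(l + 4) := by
  let s : ℤ := -(l + 3)
  have hsmall : |ψ ^ (-s) * ∑ i ∈ F, ψ ^ i| < φ ^ (-2 : ℤ) := by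
    rw [hψ, abs_mul, Nat.abs_cast, abs_goldenConj_zpow, neg_neg]
    calc φ ^ s * n < φ ^ s * φ ^ (l + 1) := by gcongr
      _ = φ ^ (-2 : ℤ) := by
        rw [← zpow_natCast, ← zpow_add₀ Real.goldenRatio_ne_zero]
        congr 1
        push_cast
        omega
  have hF_le (i : ℤ) (hi : i ∈ F) : i ≤ l :=
    le_of_mem_of_sum_goldenRatio_zpow_lt hi (by rw [hφ]; exact_mod_cast hnl)
  have hleft := card_le_card_filter_le_add (s := s) hF_le
  obtain ⟨i₀, k, hladder, hsk, hks⟩ := exists_filter_le_eq_ladder hsmall (card_pos.1 (by omega))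
  have hmem (i : ℤ) : i ∈ F ∧ i ≤ s ↔ i = i₀ ∨ ∃ j < k, i = i₀ + 2 * j + 1 := by
    simpa only [mem_filter, mem_ladder] using Finset.ext_iff.1 hladder i
  rw [hladder, card_ladder, hcard] at hleft
  refine ⟨i₀, ⟨((hmem i₀).2 (Or.inl rfl)).1, fun i hi => ?_⟩, fun j hj hjn => ?_⟩
  · by_contra! hlt
    have := (hmem i).1 ⟨hi, by omega⟩
    omega
  · refine ⟨((hmem _).2 (Or.inr ⟨(j - 1).toNat, by omega, by omega⟩)).1, fun hi => ?_, by omega⟩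
    have := (hmem _).1 ⟨hi, by omega⟩
    omega

variable {n : ℕ} {T : BState}

lemma SplitReachable.card_support_eq (h : SplitReachable (initState n) T) (hT : ∀ i, T i ≤ 1) :
    #T.support = n := by
  rw [card_eq_sum_ones, ← linearCombination_eq_sum_support _ hT,
    h.linearCombination_eq fun _ => rfl]
  simp [initState]

lemma SplitReachable.sum_support_zpow_eq {K : Type*} [Field K] {x : K} (hx : x ^ 2 = x + 1)
    (h : SplitReachable (initState n) T) (hT : ∀ i, T i ≤ 1) :
    ∑ i ∈ T.support, x ^ i = n := by
  rw [← linearCombination_eq_sum_support _ hT, h.linearCombination_eq fun i => by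
    rw [zpow_add_one_add_zpow_sub_two_of_sq_eq_add_one hx, nsmul_eq_mul, Nat.cast_ofNat]]
  simp [initState]

end LeftEdge

theorem bergman_phase_one_left_edge_general (n : ℕ) (hn : 19 ≤ n) :
    (∃ T : BState, SplitReachable (initState n) T ∧ ∀ i, T i ≤ 1) ∧
    ∀ T : BState, SplitReachable (initState n) T → (∀ i, T i ≤ 1) →
      ∃ i₀ : ℤ, T i₀ = 1 ∧ (∀ j < i₀, T j = 0) ∧ T (i₀ + 1) = 1 ∧
        ∀ j : ℤ, 1 ≤ j → (j : ℝ) ≤ (n : ℝ) - 2 * logphi n - 5 →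
          T (i₀ + 2 * j - 1) = 1 ∧ T (i₀ + 2 * j) = 0 ∧
            ((i₀ + 2 * j : ℤ) : ℝ) < -logphi n - 3 := by
  refine ⟨exists_splitReachable_forall_le_one _, fun T h hT => ?_⟩
  have hone (i : ℤ) (hi : i ∈ T.support) : T i = 1 :=
    le_antisymm (hT i) (Nat.one_le_iff_ne_zero.2 (Finsupp.mem_support_iff.1 hi))
  have hn_one : (1 : ℝ) ≤ n := by exact_mod_cast (by omega : 1 ≤ n)
  have hlog_nonneg : 0 ≤ logphi n := Real.logb_nonneg Real.one_lt_goldenRatio hn_one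
  have hlog_le := two_mul_logphi_le hn
  have hfloor_le := Nat.floor_le hlog_nonneg
  have hlog_lt := Nat.lt_floor_add_one (logphi n)
  set l := ⌊logphi n⌋₊
  have hln : 2 * l + 6 ≤ n := by
    have : 2 * (l : ℝ) + 6 ≤ n := by linarith
    exact_mod_cast this
  obtain ⟨i₀, ⟨hmem, hleast⟩, hedge⟩ := exists_isLeast_alternating_left_edge
    (h.card_support_eq hT) (h.sum_support_zpow_eq Real.goldenRatio_sq hT)
    (h.sum_support_zpow_eq Real.goldenConj_sq hT)
    (lt_goldenRatio_pow_floor_logphi_add_one (by positivity)) (by omega)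
  refine ⟨i₀, hone i₀ hmem, fun j hj => Finsupp.notMem_support_iff.1 fun hj' => ?_, ?_,
    fun j hj hjn => ?_⟩
  · exact (hleast hj').not_gt hj
  · convert hone _ (hedge 1 le_rfl (by omega)).1 using 2
    ring
  · have hjl : j ≤ n - 2 * l - 5 := by
      have : (j : ℝ) ≤ n - 2 * l - 5 := by linarith
      exact_mod_cast this
    obtain ⟨hodd, heven, hle⟩ := hedge j hj hjl
    have hle : ((i₀ + 2 * j : ℤ) : ℝ) ≤ -(l + 4) := by exact_mod_cast hle
    exact ⟨hone _ hodd, Finsupp.notMem_support_iff.1 heven, by linarith⟩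

/-- For `n ≥ 20` there is a state `T` reachable from `₀(n)` by splits only, in which no
split is legal, whose left edge has the form `1101…10` with at least `n − 2·log_φ n − 7`
zeros, each such zero at an index left of `−log_φ n − 3`. -/
theorem bergman_phase_one_left_edge (n : ℕ) (hn : 20 ≤ n) :
    ∃ T : BState, SplitReachable (initState n) T ∧ (∀ i, T i ≤ 1) ∧
      ∃ i₀ : ℤ, T i₀ = 1 ∧ (∀ j < i₀, T j = 0) ∧ T (i₀ + 1) = 1 ∧
        ∀ j : ℤ, 1 ≤ j → (j : ℝ) ≤ (n : ℝ) - 2 * logphi n - 7 →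
          T (i₀ + 2 * j - 1) = 1 ∧ T (i₀ + 2 * j) = 0 ∧
            ((i₀ + 2 * j : ℤ) : ℝ) < -logphi n - 3 := by
  obtain ⟨⟨T, hreach, hT⟩, hedge⟩ := bergman_phase_one_left_edge_general n (by omega)
  obtain ⟨i₀, hi₀, hleast, hnext, hpattern⟩ := hedge T hreach hT
  exact ⟨T, hreach, hT, i₀, hi₀, hleast, hnext, fun j hj hjn => hpattern j hj (by linarith)⟩
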